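/- Let {M_i, π_{i,j} | i ≤ j < ω} be a directed system of models of set theory indexed by (ω,≤) such that M_{i+j} ⊆ M_i for all i,j < ω. Suppose there are formulas φ and ψ of the language of set theory such that for all i, j, k < ω with j ≤ k and all x, y ∈ M_i: x ∈ M_{i+j} iff M_i ⊨ φ(j, x), and (x ∈ M_{i+j} and π_{i+j,i+k}(x) = y) iff M_i ⊨ ψ(j, k, x, y). Then the direct limit M_∞ of the system is well-founded. -/

import Mathlib

/- ## A framework for transitive class/set models of fragments of ZFC,
     inside the universe `ZFSet` of ZF sets. -/

open FirstOrder FirstOrder.Language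

/-- The language of set theory: a single binary relation symbol `∈`. -/
inductive SetRelSym : ℕ → Type
  | mem : SetRelSym 2

/-- The first-order language of set theory. -/
def setL : FirstOrder.Language := ⟨fun _ => Empty, SetRelSym⟩

/-- Evaluation of a term of the language of set theory (terms are just variables). -/
def tval {n : ℕ} (v : Fin n → ZFSet) : setL.Term (Empty ⊕ Fin n) → ZFSet
  | .var (Sum.inl e) => e.elim
  | .var (Sum.inr i) => v i
  | .func f _ => f.elim

/-- Tarskian satisfaction of a formula of the language of set theory in a class `S` of
ZF-sets (equipped with true membership), under the assignment `v`. -/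
def ZSat (S : Set ZFSet) : ∀ {n : ℕ}, setL.BoundedFormula Empty n → (Fin n → ZFSet) → Prop
  | _, .falsum, _ => False
  | _, .equal t u, v => tval v t = tval v u
  | _, .rel R ts, v =>
      match R with
      | SetRelSym.mem => tval v (ts 0) ∈ tval v (ts 1)
  | _, .imp φ ψ, v => ZSat S φ v → ZSat S ψ v
  | _, .all φ, v => ∀ x ∈ S, ZSat S φ (Fin.snoc v x)

/-- Satisfaction of a sentence in a class of ZF-sets. -/
def SatS (S : Set ZFSet) (σ : setL.Sentence) : Prop := ZSat S σ finZeroElim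

/-- A class of ZF-sets is transitive. -/
def IsTransClass (S : Set ZFSet) : Prop := ∀ x ∈ S, ∀ y ∈ x, y ∈ S

/-- `r` is a well-ordering of the set `x`, from the point of view of the class `S`
(Kuratowski pairs code the relation; minimality is required for nonempty subsets of `x`
lying in `S`). -/
def WellOrders (S : Set ZFSet) (r x : ZFSet) : Prop :=
  (∀ a ∈ x, ZFSet.pair a a ∉ r) ∧
  (∀ a ∈ x, ∀ b ∈ x, ∀ c ∈ x, ZFSet.pair a b ∈ r → ZFSet.pair b c ∈ r → ZFSet.pair a c ∈ r) ∧
  (∀ a ∈ x, ∀ b ∈ x, a ≠ b → (ZFSet.pair a b ∈ r ∨ ZFSet.pair b a ∈ r)) ∧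
  (∀ y ∈ S, (∀ z ∈ y, z ∈ x) → y ≠ ∅ → ∃ m ∈ y, ∀ z ∈ y, ZFSet.pair z m ∉ r)

/-- `S` is a transitive model of ZFC⁻, i.e. of ZFC stated with the Replacement Scheme and
the Well-Ordering Theorem but without the Power Set Axiom.  (Extensionality and Foundation
are automatic for transitive classes of ZF-sets.) -/
def ModelsZFCminus (S : Set ZFSet) : Prop :=
  IsTransClass S ∧
  (∅ : ZFSet) ∈ S ∧
  (∀ x ∈ S, ∀ y ∈ S, ({x, y} : ZFSet) ∈ S) ∧
  (∀ x ∈ S, (ZFSet.sUnion x : ZFSet) ∈ S) ∧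
  ZFSet.omega ∈ S ∧
  (∀ (n : ℕ) (φ : setL.BoundedFormula Empty (n + 1)) (p : Fin n → ZFSet),
    (∀ i, p i ∈ S) → ∀ a ∈ S, ∃ b ∈ S, ∀ y, y ∈ b ↔ (y ∈ a ∧ ZSat S φ (Fin.snoc p y))) ∧
  (∀ (n : ℕ) (φ : setL.BoundedFormula Empty (n + 2)) (p : Fin n → ZFSet),
    (∀ i, p i ∈ S) → ∀ a ∈ S,
      (∀ x ∈ a, ∃! y, y ∈ S ∧ ZSat S φ (Fin.snoc (Fin.snoc p x) y)) →
      ∃ b ∈ S, ∀ y, y ∈ b ↔ ∃ x ∈ a, y ∈ S ∧ ZSat S φ (Fin.snoc (Fin.snoc p x) y)) ∧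
  (∀ x ∈ S, ∃ r ∈ S, WellOrders S r x)

/-- `S` is a transitive model of ZFC. -/
def ModelsZFC (S : Set ZFSet) : Prop :=
  ModelsZFCminus S ∧ ∀ x ∈ S, ∃ p ∈ S, ∀ y, y ∈ p ↔ (y ∈ S ∧ y ⊆ x)

/-- `f` is (the graph of) a surjection of `a` onto `b`. -/
def SurjFun (f a b : ZFSet) : Prop :=
  ZFSet.IsFunc a b f ∧ ∀ y ∈ b, ∃ x ∈ a, ZFSet.pair x y ∈ f

/-- `f` is (the graph of) an injection of `a` into `b`. -/
def InjFun (f a b : ZFSet) : Prop :=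
  ZFSet.IsFunc a b f ∧ ∀ x ∈ a, ∀ x' ∈ a, ∀ y, ZFSet.pair x y ∈ f → ZFSet.pair x' y ∈ f → x = x'

/-- `f` is (the graph of) a cofinal function from `β` into the ordinal `α`. -/
def CofinalFun (f β α : ZFSet) : Prop :=
  ZFSet.IsFunc β α f ∧ ∀ ξ ∈ α, ∃ η ∈ β, ∃ ζ, ZFSet.pair η ζ ∈ f ∧ (ξ ∈ ζ ∨ ξ = ζ)

/-- `μ = cof(α)` as computed inside the class `S` (for `S = Set.univ`, the true cofinality). -/
def IsCofOf (S : Set ZFSet) (α μ : ZFSet) : Prop :=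
  μ ∈ S ∧ μ.IsOrdinal ∧ (∃ f ∈ S, CofinalFun f μ α) ∧
  ∀ ν ∈ S, ZFSet.IsOrdinal ν → (∃ f ∈ S, CofinalFun f ν α) → μ ⊆ ν

/-- `κ` is a cardinal from the point of view of the class `S`
(for `S = Set.univ`, a true cardinal). -/
def IsCardIn (S : Set ZFSet) (κ : ZFSet) : Prop :=
  κ.IsOrdinal ∧ ∀ α ∈ κ, ∀ f ∈ S, ¬ SurjFun f α κ

/-- `μ` is an (infinite) regular cardinal from the point of view of the class `S`. -/
def IsRegularIn (S : Set ZFSet) (μ : ZFSet) : Prop :=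
  ZFSet.omega ⊆ μ ∧ IsCardIn S μ ∧ IsCofOf S μ μ

/-- `ν = μ⁺`, the cardinal successor of `μ`, as computed in the class `S`. -/
def CardSuccIn (S : Set ZFSet) (μ ν : ZFSet) : Prop :=
  ν ∈ S ∧ IsCardIn S ν ∧ μ ∈ ν ∧ ∀ ξ ∈ S, IsCardIn S ξ → μ ∈ ξ → ν ⊆ ξ

/-- `μ` is the largest cardinal of the model `S`. -/
def IsLargestCardIn (S : Set ZFSet) (μ : ZFSet) : Prop :=
  μ ∈ S ∧ IsCardIn S μ ∧ ∀ x ∈ S, IsCardIn S x → x ⊆ μ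

/-- `α = sup A`, for `A` a collection of ordinals: `α` is the least ordinal above all of them. -/
def IsSupOf (α : ZFSet) (A : Set ZFSet) : Prop :=
  α.IsOrdinal ∧ (∀ a ∈ A, a ⊆ α) ∧ ∀ β : ZFSet, β.IsOrdinal → (∀ a ∈ A, a ⊆ β) → α ⊆ β

/-- `π` is an elementary embedding (for the language of set theory) from the class `S`
into the class `T`. -/
def IsElem (S T : Set ZFSet) (π : ZFSet → ZFSet) : Prop :=
  (∀ x ∈ S, π x ∈ T) ∧
  ∀ (n : ℕ) (φ : setL.BoundedFormula Empty n) (v : Fin n → ZFSet),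
    (∀ i, v i ∈ S) → (ZSat S φ v ↔ ZSat T φ (fun i => π (v i)))

/-- A directed system of models of set theory: a directed partial order `ι`, transitive
(set) models `M i` of ZFC, and commuting elementary embeddings `pi i j : M i → M j`. -/
structure DirSystem (ι : Type) [PartialOrder ι] where
  M : ι → ZFSet
  pi : ι → ι → ZFSet → ZFSet
  directed : ∀ i j : ι, ∃ k, i ≤ k ∧ j ≤ k
  zfc : ∀ i, ModelsZFC (M i).toSet
  elem : ∀ i j, i ≤ j → IsElem (M i).toSet (M j).toSet (pi i j)
  map_id : ∀ i, ∀ x ∈ M i, pi i i x = x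
  map_comp : ∀ i j k, i ≤ j → j ≤ k → ∀ x ∈ M i, pi j k (pi i j x) = pi i k x

/-- `limit` (a transitive class) together with the maps `e i : M i → limit` is the
(transitivized) direct limit of the well-founded directed system `D`: the maps are
elementary, commute with the system maps, and every element of the limit is in the
range of some `e i`. -/
structure IsDirLimit {ι : Type} [PartialOrder ι] (D : DirSystem ι)
    (limit : Set ZFSet) (e : ι → ZFSet → ZFSet) : Prop where
  trans : IsTransClass limit
  elem : ∀ i, IsElem (D.M i).toSet limit (e i)
  compat : ∀ i j, i ≤ j → ∀ x ∈ D.M i, e j (D.pi i j x) = e i x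
  exhaust : ∀ y ∈ limit, ∃ i, ∃ x ∈ D.M i, e i x = y

/-- The `A`-indexed family of unary relations (sets) `R i` is uniformly definable over the
directed system `D`: some formula `φ(v, u)` with a parameter `a ∈ M i` (moved along by the
system maps) defines `R j` over `M j` for all `j ≥ i`. -/
def UnifDef1 {ι : Type} [PartialOrder ι] (D : DirSystem ι) (A : Set ι)
    (R : ι → Set ZFSet) : Prop :=
  ∃ i ∈ A, ∃ a, a ∈ D.M i ∧ ∃ φ : setL.BoundedFormula Empty 2,
    ∀ j, i ≤ j → j ∈ A ∧ (∀ x ∈ R j, x ∈ D.M j) ∧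
      ∀ x, x ∈ D.M j → (x ∈ R j ↔ ZSat (D.M j).toSet φ ![x, D.pi i j a])

/-- The family of binary relations `R i` is uniformly definable over the directed system `D`. -/
def UnifDef2 {ι : Type} [PartialOrder ι] (D : DirSystem ι)
    (R : ι → ZFSet → ZFSet → Prop) : Prop :=
  ∃ i, ∃ a, a ∈ D.M i ∧ ∃ φ : setL.BoundedFormula Empty 3,
    ∀ j, i ≤ j → (∀ x y, R j x y → x ∈ D.M j ∧ y ∈ D.M j) ∧
      ∀ x, x ∈ D.M j → ∀ y, y ∈ D.M j →
        (R j x y ↔ ZSat (D.M j).toSet φ ![x, y, D.pi i j a])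

/-- The von Neumann natural number `n` as a ZF-set. -/
def natZ : ℕ → ZFSet
  | 0 => ∅
  | n + 1 => insert (natZ n) (natZ n)

/-! ### Renaming and a calculus of uniformly definable predicates -/

def tren {m n : ℕ} (f : Fin m → Fin n) : setL.Term (Empty ⊕ Fin m) → setL.Term (Empty ⊕ Fin n)
  | .var (Sum.inl e) => e.elim
  | .var (Sum.inr i) => .var (Sum.inr (f i))
  | .func g _ => g.elim

theorem tval_tren {m n : ℕ} (f : Fin m → Fin n) (v : Fin n → ZFSet)
    (t : setL.Term (Empty ⊕ Fin m)) : tval v (tren f t) = tval (fun j => v (f j)) t := by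
  match t with
  | .var (Sum.inl e) => exact e.elim
  | .var (Sum.inr i) => rfl
  | .func g _ => exact g.elim

def fren : ∀ {m n : ℕ}, (Fin m → Fin n) → setL.BoundedFormula Empty m →
    setL.BoundedFormula Empty n
  | _, _, _, .falsum => .falsum
  | _, _, f, .equal t u => .equal (tren f t) (tren f u)
  | _, _, f, .rel R ts => .rel R (fun j => tren f (ts j))
  | _, _, f, .imp a b => .imp (fren f a) (fren f b)
  | _, n, f, .all a => .all (fren (Fin.snoc (fun j => (f j).castSucc) (Fin.last n)) a)

theorem ZSat_fren (S : Set ZFSet) {m : ℕ} (φ : setL.BoundedFormula Empty m) :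
    ∀ {n : ℕ} (f : Fin m → Fin n) (v : Fin n → ZFSet),
      ZSat S (fren f φ) v ↔ ZSat S φ (fun j => v (f j)) := by
  induction φ with
  | falsum => intros; rfl
  | equal t u => intro n f v; simp only [fren, ZSat, tval_tren]
  | rel R ts =>
    intro n f v
    cases R
    simp only [fren, ZSat, tval_tren]
  | imp a b iha ihb => intro n f v; simp only [fren, ZSat, iha, ihb]
  | all a ih =>
    intro n f v
    simp only [fren, ZSat, ih]
    refine forall_congr' fun x => forall_congr' fun _ => ?_
    refine iff_of_eq (congrArg _ ?_)
    funext j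
    refine Fin.lastCases ?_ (fun j => ?_) j <;> simp

def Dfn (S : ℕ → Set ZFSet) {n : ℕ} (P : ℕ → (Fin n → ZFSet) → Prop) : Prop :=
  ∃ φ : setL.BoundedFormula Empty n, ∀ i v, (∀ a, v a ∈ S i) → (ZSat (S i) φ v ↔ P i v)

namespace Dfn

variable {S : ℕ → Set ZFSet} {n : ℕ}

theorem congr {P Q : ℕ → (Fin n → ZFSet) → Prop} (h : Dfn S P)
    (hPQ : ∀ i v, (∀ a, v a ∈ S i) → (P i v ↔ Q i v)) : Dfn S Q := by
  obtain ⟨φ, hφ⟩ := h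
  exact ⟨φ, fun i v hv => (hφ i v hv).trans (hPQ i v hv)⟩

theorem mem (a b : Fin n) : Dfn S (fun _ v => v a ∈ v b) :=
  ⟨.rel SetRelSym.mem ![.var (Sum.inr a), .var (Sum.inr b)], fun _ _ _ => Iff.rfl⟩

theorem eq (a b : Fin n) : Dfn S (fun _ v => v a = v b) :=
  ⟨.equal (.var (Sum.inr a)) (.var (Sum.inr b)), fun _ _ _ => Iff.rfl⟩

theorem imp {P Q : ℕ → (Fin n → ZFSet) → Prop} (h : Dfn S P) (h' : Dfn S Q) :
    Dfn S (fun i v => P i v → Q i v) := by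
  obtain ⟨φ, hφ⟩ := h
  obtain ⟨χ, hχ⟩ := h'
  exact ⟨.imp φ χ, fun i v hv => by simp only [ZSat, hφ i v hv, hχ i v hv]⟩

theorem fls : Dfn S (fun _ (_ : Fin n → ZFSet) => False) := ⟨.falsum, fun _ _ _ => Iff.rfl⟩

theorem not {P : ℕ → (Fin n → ZFSet) → Prop} (h : Dfn S P) :
    Dfn S (fun i v => ¬ P i v) := h.imp fls

theorem and {P Q : ℕ → (Fin n → ZFSet) → Prop} (h : Dfn S P) (h' : Dfn S Q) :
    Dfn S (fun i v => P i v ∧ Q i v) :=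
  (h.imp h'.not).not.congr fun _ _ _ => by tauto

theorem or {P Q : ℕ → (Fin n → ZFSet) → Prop} (h : Dfn S P) (h' : Dfn S Q) :
    Dfn S (fun i v => P i v ∨ Q i v) :=
  (h.not.imp h').congr fun _ _ _ => by tauto

theorem iff {P Q : ℕ → (Fin n → ZFSet) → Prop} (h : Dfn S P) (h' : Dfn S Q) :
    Dfn S (fun i v => P i v ↔ Q i v) :=
  ((h.imp h').and (h'.imp h)).congr fun _ _ _ => by tauto

theorem all {Q : ℕ → (Fin n → ZFSet) → ZFSet → Prop}
    (h : Dfn S (n := n + 1) (fun i v => Q i (fun j => v j.castSucc) (v (Fin.last n)))) :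
    Dfn S (fun i v => ∀ x ∈ S i, Q i v x) := by
  obtain ⟨φ, hφ⟩ := h
  refine ⟨.all φ, fun i v hv => ?_⟩
  simp only [ZSat]
  refine forall_congr' fun x => forall_congr' fun hx => ?_
  rw [hφ i _ (fun a => by refine Fin.lastCases ?_ (fun j => ?_) a <;> simp [hx, hv])]
  simp

theorem ex {Q : ℕ → (Fin n → ZFSet) → ZFSet → Prop}
    (h : Dfn S (n := n + 1) (fun i v => Q i (fun j => v j.castSucc) (v (Fin.last n)))) :
    Dfn S (fun i v => ∃ x ∈ S i, Q i v x) :=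
  (all (Q := fun i v x => ¬ Q i v x) h.not).not.congr fun i v _ => by push Not; rfl

theorem comp {m : ℕ} {P : ℕ → (Fin m → ZFSet) → Prop} (h : Dfn S P) (f : Fin m → Fin n) :
    Dfn S (fun i v => P i (fun j => v (f j))) := by
  obtain ⟨φ, hφ⟩ := h
  exact ⟨fren f φ, fun i v hv => by rw [ZSat_fren, hφ i _ (fun a => hv _)]⟩

theorem c1 {P : ℕ → ZFSet → Prop} (h : Dfn S (n := 1) (fun i v => P i (v 0))) (a : Fin n) :
    Dfn S (fun i v => P i (v a)) := h.comp ![a]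

theorem c2 {P : ℕ → ZFSet → ZFSet → Prop} (h : Dfn S (n := 2) (fun i v => P i (v 0) (v 1)))
    (a b : Fin n) : Dfn S (fun i v => P i (v a) (v b)) := h.comp ![a, b]

theorem c3 {P : ℕ → ZFSet → ZFSet → ZFSet → Prop}
    (h : Dfn S (n := 3) (fun i v => P i (v 0) (v 1) (v 2)))
    (a b c : Fin n) : Dfn S (fun i v => P i (v a) (v b) (v c)) := h.comp ![a, b, c]

theorem c4 {P : ℕ → ZFSet → ZFSet → ZFSet → ZFSet → Prop}
    (h : Dfn S (n := 4) (fun i v => P i (v 0) (v 1) (v 2) (v 3)))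
    (a b c d : Fin n) : Dfn S (fun i v => P i (v a) (v b) (v c) (v d)) := h.comp ![a, b, c, d]

theorem form4 (ψ : setL.BoundedFormula Empty 4) :
    Dfn S (n := 4) (fun i v => ZSat (S i) ψ ![v 0, v 1, v 2, v 3]) :=
  ⟨ψ, fun i v _ => iff_of_eq (congrArg _ (by funext j; fin_cases j <;> rfl))⟩

end Dfn

/-! ### Basic set-theoretic predicates -/

section models

variable {S : ℕ → Set ZFSet} (hS : ∀ i, ModelsZFC (S i))
include hS

theorem S_trans {i : ℕ} {x y : ZFSet} (hx : x ∈ S i) (hy : y ∈ x) : y ∈ S i :=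
  (hS i).1.1 x hx y hy

theorem S_pairset {i : ℕ} {x y : ZFSet} (hx : x ∈ S i) (hy : y ∈ S i) :
    ({x, y} : ZFSet) ∈ S i := (hS i).1.2.2.1 x hx y hy

theorem S_single {i : ℕ} {x : ZFSet} (hx : x ∈ S i) : ({x} : ZFSet) ∈ S i := by
  have := S_pairset hS hx hx
  rwa [show ({x, x} : ZFSet) = {x} by ext; simp] at this

theorem S_pair {i : ℕ} {x y : ZFSet} (hx : x ∈ S i) (hy : y ∈ S i) :
    ZFSet.pair x y ∈ S i :=
  S_pairset hS (S_single hS hx) (S_pairset hS hx hy)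

theorem S_sUnion {i : ℕ} {x : ZFSet} (hx : x ∈ S i) : (ZFSet.sUnion x : ZFSet) ∈ S i :=
  (hS i).1.2.2.2.1 x hx

theorem S_union {i : ℕ} {x y : ZFSet} (hx : x ∈ S i) (hy : y ∈ S i) : x ∪ y ∈ S i := by
  have := S_sUnion hS (S_pairset hS hx hy)
  rwa [show (ZFSet.sUnion {x, y} : ZFSet) = x ∪ y by ext; simp] at this

theorem S_unpair {i : ℕ} {x y : ZFSet} (h : ZFSet.pair x y ∈ S i) : x ∈ S i ∧ y ∈ S i := by
  have h1 : ({x, y} : ZFSet) ∈ S i := S_trans hS h (by simp [ZFSet.pair])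
  exact ⟨S_trans hS h1 (by simp), S_trans hS h1 (by simp)⟩

theorem S_insert {i : ℕ} {x : ZFSet} (hx : x ∈ S i) : insert x x ∈ S i := by
  have := S_union hS (S_single hS hx) hx
  rwa [show ({x} : ZFSet) ∪ x = insert x x by ext; simp] at this

theorem d_pairset : Dfn S (n := 3) (fun _ v => v 0 = ({v 1, v 2} : ZFSet)) := by
  refine Dfn.congr (P := fun i v => ∀ u ∈ S i, u ∈ v 0 ↔ u = v 1 ∨ u = v 2) ?_ ?_
  · exact Dfn.all ((Dfn.mem _ _).iff ((Dfn.eq _ _).or (Dfn.eq _ _)))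
  · intro i v hv
    constructor
    · intro h
      ext u
      rw [ZFSet.mem_pair]
      refine ⟨fun hu => (h u (S_trans hS (hv 0) hu)).1 hu, fun hu => ?_⟩
      have : u ∈ S i := by rcases hu with rfl | rfl <;> exact hv _
      exact (h u this).2 hu
    · intro h u _
      rw [h, ZFSet.mem_pair]

theorem d_insert : Dfn S (n := 2) (fun _ v => v 0 = (insert (v 1) (v 1) : ZFSet)) := by
  refine Dfn.congr (P := fun i v => ∀ u ∈ S i, u ∈ v 0 ↔ u = v 1 ∨ u ∈ v 1) ?_ ?_
  · exact Dfn.all ((Dfn.mem _ _).iff ((Dfn.eq _ _).or (Dfn.mem _ _)))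
  · intro i v hv
    constructor
    · intro h
      ext u
      rw [ZFSet.mem_insert_iff]
      refine ⟨fun hu => (h u (S_trans hS (hv 0) hu)).1 hu, fun hu => ?_⟩
      have : u ∈ S i := by
        rcases hu with rfl | hu
        · exact hv _
        · exact S_trans hS (hv 1) hu
      exact (h u this).2 hu
    · intro h u _
      rw [h, ZFSet.mem_insert_iff]

theorem d_pair : Dfn S (n := 3) (fun _ v => v 0 = ZFSet.pair (v 1) (v 2)) := by
  refine Dfn.congr (P := fun i v => ∃ s ∈ S i, ∃ t ∈ S i,
    s = ({v 1, v 1} : ZFSet) ∧ t = ({v 1, v 2} : ZFSet) ∧ v 0 = ({s, t} : ZFSet)) ?_ ?_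
  · exact Dfn.ex (Dfn.ex (((d_pairset hS).c3 (P := fun _ a b c => a = {b, c}) _ _ _).and
      (((d_pairset hS).c3 (P := fun _ a b c => a = {b, c}) _ _ _).and
      ((d_pairset hS).c3 (P := fun _ a b c => a = {b, c}) _ _ _))))
  · intro i v hv
    have e : ({v 1, v 1} : ZFSet) = {v 1} := by ext; simp
    constructor
    · rintro ⟨s, _, t, _, rfl, rfl, h⟩
      rw [h, e]; rfl
    · intro h
      refine ⟨_, S_pairset hS (hv 1) (hv 1), _, S_pairset hS (hv 1) (hv 2), rfl, rfl, ?_⟩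
      rw [h, e]; rfl

theorem d_pairmem : Dfn S (n := 3) (fun _ v => ZFSet.pair (v 0) (v 1) ∈ v 2) := by
  refine Dfn.congr (P := fun i v => ∃ s ∈ S i, s = ZFSet.pair (v 0) (v 1) ∧ s ∈ v 2) ?_ ?_
  · exact Dfn.ex (((d_pair hS).c3 (P := fun _ a b c => a = ZFSet.pair b c) _ _ _).and
      (Dfn.mem _ _))
  · intro i v hv
    constructor
    · rintro ⟨s, _, rfl, h⟩; exact h
    · intro h; exact ⟨_, S_trans hS (hv 2) h, rfl, h⟩

omit hS in
theorem d_subset' : Dfn S (n := 2) (fun i v => ∀ u ∈ S i, u ∈ v 0 → u ∈ v 1) :=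
  Dfn.all ((Dfn.mem _ _).imp (Dfn.mem _ _))

theorem d_subset : Dfn S (n := 2) (fun _ v => v 0 ⊆ v 1) :=
  d_subset'.congr fun _ _ hv => ⟨fun h _ hu => h _ (S_trans hS (hv 0) hu) hu,
    fun h _ _ hu => h hu⟩

theorem d_empty : Dfn S (n := 1) (fun _ v => v 0 = ∅) := by
  refine Dfn.congr (P := fun i v => ∀ u ∈ S i, ¬ u ∈ v 0) (Dfn.all (Dfn.mem _ _).not) ?_
  intro i v hv
  rw [ZFSet.eq_empty]
  exact ⟨fun h u hu => h u (S_trans hS (hv 0) hu) hu, fun h u _ => h u⟩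

omit hS in
theorem natZ_mem_omega (n : ℕ) : natZ n ∈ ZFSet.omega := by
  induction n with
  | zero => exact ZFSet.omega_zero
  | succ n ih => exact ZFSet.omega_succ ih

omit hS in
theorem mem_omega_natZ {x : ZFSet} (h : x ∈ ZFSet.omega) : ∃ n, x = natZ n := by
  have key : ∀ n : ℕ, ZFSet.mk (PSet.ofNat n) = natZ n := by
    intro n
    induction n with
    | zero => rfl
    | succ n ih => rw [natZ, ← ih]; rfl
  revert h
  refine Quotient.inductionOn x fun y => ?_
  rintro ⟨⟨n⟩, h⟩
  exact ⟨n, (ZFSet.sound h).trans (key n)⟩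

omit hS in
theorem natZ_mono {a b : ℕ} (h : a ≤ b) : natZ a ⊆ natZ b := by
  induction h with
  | refl => exact fun _ h => h
  | step _ ih => exact fun _ h => ZFSet.mem_insert_iff.2 (Or.inr (ih h))

omit hS in
theorem natZ_mem {a b : ℕ} (h : a < b) : natZ a ∈ natZ b :=
  natZ_mono (Nat.succ_le_of_lt h) (ZFSet.mem_insert_iff.2 (Or.inl rfl))

omit hS in
theorem natZ_sub {a b : ℕ} : natZ a ⊆ natZ b ↔ a ≤ b := by
  refine ⟨fun h => ?_, natZ_mono⟩
  by_contra hc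
  exact ZFSet.mem_irrefl _ (h (natZ_mem (not_le.1 hc)))

omit hS in
theorem natZ_inj {a b : ℕ} (h : natZ a = natZ b) : a = b :=
  le_antisymm (natZ_sub.1 (fun _ hx => h ▸ hx)) (natZ_sub.1 (fun _ hx => h ▸ hx))

theorem S_nat (i n : ℕ) : natZ n ∈ S i := S_trans hS (hS i).1.2.2.2.2.1 (natZ_mem_omega n)

theorem d_nat : Dfn S (n := 1) (fun _ v => ∃ n, v 0 = natZ n) := by
  refine Dfn.congr (P := fun i v => ∀ a ∈ S i, ((∀ e ∈ S i, e = ∅ → e ∈ a) ∧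
    (∀ u ∈ S i, u ∈ a → ∀ s ∈ S i, s = insert u u → s ∈ a)) → v 0 ∈ a) ?_ ?_
  · refine Dfn.all (Dfn.imp (Dfn.and ?_ ?_) (Dfn.mem _ _))
    · exact Dfn.all (((d_empty hS).c1 (P := fun _ a => a = ∅) _).imp (Dfn.mem _ _))
    · exact Dfn.all ((Dfn.mem _ _).imp (Dfn.all
        (((d_insert hS).c2 (P := fun _ a b => a = insert b b) _ _).imp (Dfn.mem _ _))))
  · intro i v hv
    constructor
    · intro h
      refine mem_omega_natZ (h _ (hS i).1.2.2.2.2.1 ⟨?_, ?_⟩)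
      · rintro e _ rfl; exact ZFSet.omega_zero
      · rintro u _ hu s _ rfl; exact ZFSet.omega_succ hu
    · rintro ⟨n, hn⟩ a _ ⟨h0, h1⟩
      rw [hn]
      clear hn
      induction n with
      | zero => exact h0 _ (hS i).1.2.1 rfl
      | succ n ih => exact h1 _ (S_nat hS i n) ih _ (S_nat hS i (n+1)) rfl

theorem S_sep {Q : ℕ → ZFSet → ZFSet → Prop} (hQ : Dfn S (n := 2) (fun i v => Q i (v 0) (v 1)))
    {i : ℕ} {p a : ZFSet} (hp : p ∈ S i) (ha : a ∈ S i) :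
    ∃ b ∈ S i, ∀ y, y ∈ b ↔ y ∈ a ∧ Q i p y := by
  obtain ⟨φ, hφ⟩ := hQ
  obtain ⟨b, hb, h⟩ := (hS i).1.2.2.2.2.2.1 1 φ ![p] (by intro j; fin_cases j; exact hp) a ha
  refine ⟨b, hb, fun y => (h y).trans (and_congr_right fun hy => ?_)⟩
  have hyS := S_trans hS ha hy
  have := hφ i (Fin.snoc ![p] y) (by
    intro j; fin_cases j
    · exact hp
    · exact hyS)
  exact this

theorem S_image {Q : ℕ → ZFSet → ZFSet → ZFSet → Prop}
    (hQ : Dfn S (n := 3) (fun i v => Q i (v 0) (v 1) (v 2)))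
    {i : ℕ} {p a : ZFSet} (hp : p ∈ S i) (ha : a ∈ S i)
    (hf : ∀ x ∈ a, ∀ y ∈ S i, ∀ y' ∈ S i, Q i p x y → Q i p x y' → y = y') :
    ∃ b ∈ S i, ∀ y, y ∈ b ↔ ∃ x ∈ a, y ∈ S i ∧ Q i p x y := by
  obtain ⟨a', ha', h'⟩ := S_sep hS (Q := fun i p x => ∃ y ∈ S i, Q i p x y)
    (Dfn.ex (hQ.c3 _ _ _)) hp ha
  obtain ⟨φ, hφ⟩ := hQ
  have key : ∀ x ∈ S i, ∀ y ∈ S i,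
      (ZSat (S i) φ (Fin.snoc (Fin.snoc ![p] x : Fin 2 → ZFSet) y) ↔ Q i p x y) := by
    intro x hx y hy
    exact hφ i (Fin.snoc (Fin.snoc ![p] x : Fin 2 → ZFSet) y) (by
      intro j; fin_cases j
      · exact hp
      · exact hx
      · exact hy)
  obtain ⟨b, hb, h⟩ := (hS i).1.2.2.2.2.2.2.1 1 φ ![p] (by intro j; fin_cases j; exact hp) a' ha' (by
    intro x hx
    have hxS := S_trans hS ha' hx
    obtain ⟨hxa, y, hy, hQy⟩ := (h' x).1 hx
    refine ⟨y, ⟨hy, (key x hxS y hy).2 hQy⟩, ?_⟩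
    rintro z ⟨hz, hQz⟩
    exact hf x hxa z hz y hy ((key x hxS z hz).1 hQz) hQy)
  refine ⟨b, hb, fun y => (h y).trans ⟨?_, ?_⟩⟩
  · rintro ⟨x, hx, hy, hQy⟩
    exact ⟨x, ((h' x).1 hx).1, hy, (key x (S_trans hS ha' hx) y hy).1 hQy⟩
  · rintro ⟨x, hx, hy, hQy⟩
    exact ⟨x, (h' x).2 ⟨hx, y, hy, hQy⟩, hy, (key x (S_trans hS ha hx) y hy).2 hQy⟩

end models

/-! ### Bisimulations -/

section bisim

def Bis (S : ℕ → Set ZFSet) (E : ℕ → ZFSet → ZFSet → Prop) (i : ℕ) (R : ZFSet) : Prop :=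
  ∀ p ∈ S i, ∀ c ∈ S i, ZFSet.pair p c ∈ R →
    (∀ q ∈ S i, E i q p → ∃ c' ∈ S i, c' ∈ c ∧ ZFSet.pair q c' ∈ R) ∧
    (∀ c' ∈ S i, c' ∈ c → ∃ q ∈ S i, E i q p ∧ ZFSet.pair q c' ∈ R)

def Good (S : ℕ → Set ZFSet) (E : ℕ → ZFSet → ZFSet → Prop) (i : ℕ) (p : ZFSet) : Prop :=
  ∃ R ∈ S i, Bis S E i R ∧ ∃ c ∈ S i, ZFSet.pair p c ∈ R

def MinR (S : ℕ → Set ZFSet) (E : ℕ → ZFSet → ZFSet → Prop) (i : ℕ) (p R : ZFSet) : Prop :=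
  (Bis S E i R ∧ ∃ c ∈ S i, ZFSet.pair p c ∈ R) ∧
    ∀ R' ∈ S i, (Bis S E i R' ∧ ∃ c ∈ S i, ZFSet.pair p c ∈ R') → R ⊆ R'

variable {S : ℕ → Set ZFSet} (hS : ∀ i, ModelsZFC (S i)) {E : ℕ → ZFSet → ZFSet → Prop}
  (hE : Dfn S (n := 2) (fun i v => E i (v 0) (v 1)))

include hS in
theorem d_pm {n : ℕ} (a b c : Fin n) : Dfn S (fun _ v => ZFSet.pair (v a) (v b) ∈ v c) :=
  (d_pairmem hS).c3 (P := fun _ a b c => ZFSet.pair a b ∈ c) a b c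

include hS hE

theorem d_bis : Dfn S (n := 1) (fun i v => Bis S E i (v 0)) := by
  unfold Bis
  refine Dfn.all (Dfn.all (Dfn.imp (d_pm hS _ _ _) (Dfn.and ?_ ?_)))
  · exact Dfn.all (Dfn.imp (hE.c2 _ _) (Dfn.ex (Dfn.and (Dfn.mem _ _) (d_pm hS _ _ _))))
  · exact Dfn.all (Dfn.imp (Dfn.mem _ _) (Dfn.ex (Dfn.and (hE.c2 _ _) (d_pm hS _ _ _))))

theorem d_bisat : Dfn S (n := 2)
    (fun i v => Bis S E i (v 1) ∧ ∃ c ∈ S i, ZFSet.pair (v 0) c ∈ v 1) :=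
  Dfn.and ((d_bis hS hE).c1 _) (Dfn.ex (d_pm hS _ _ _))

theorem d_good : Dfn S (n := 1) (fun i v => Good S E i (v 0)) := by
  unfold Good
  exact Dfn.ex ((d_bisat hS hE).c2
    (P := fun i p R => Bis S E i R ∧ ∃ c ∈ S i, ZFSet.pair p c ∈ R) _ _)

theorem d_min : Dfn S (n := 2) (fun i v => MinR S E i (v 0) (v 1)) := by
  unfold MinR
  refine Dfn.and ((d_bisat hS hE).c2
    (P := fun i p R => Bis S E i R ∧ ∃ c ∈ S i, ZFSet.pair p c ∈ R) _ _) ?_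
  exact Dfn.all (Dfn.imp ((d_bisat hS hE).c2
    (P := fun i p R => Bis S E i R ∧ ∃ c ∈ S i, ZFSet.pair p c ∈ R) _ _)
    ((d_subset hS).c2 (P := fun _ a b => a ⊆ b) _ _))

omit hE in
theorem bis_uniq {i : ℕ} {R R' : ZFSet} (h : Bis S E i R) (h' : Bis S E i R') (c : ZFSet) :
    ∀ p ∈ S i, c ∈ S i → ∀ c' ∈ S i, ZFSet.pair p c ∈ R → ZFSet.pair p c' ∈ R' → c = c' := by
  refine ZFSet.inductionOn c fun c ih => ?_
  intro p hp hc c' hc' hR hR'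
  ext d
  constructor
  · intro hd
    have hdS := S_trans hS hc hd
    obtain ⟨q, hq, hqp, hqd⟩ := (h p hp c hc hR).2 d hdS hd
    obtain ⟨d', hd', hdc', hqd'⟩ := (h' p hp c' hc' hR').1 q hq hqp
    rwa [ih d hd q hq hdS d' hd' hqd hqd']
  · intro hd
    have hdS := S_trans hS hc' hd
    obtain ⟨q, hq, hqp, hqd⟩ := (h' p hp c' hc' hR').2 d hdS hd
    obtain ⟨d', hd', hdc', hqd'⟩ := (h p hp c hc hR).1 q hq hqp
    rwa [← ih d' hdc' q hq hd' d hdS hqd' hqd]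

theorem exists_min {i : ℕ} {p : ZFSet} (hp : p ∈ S i) (h : Good S E i p) :
    ∃ R ∈ S i, MinR S E i p R := by
  obtain ⟨R, hR, hB, c, hc, hpc⟩ := h
  obtain ⟨R0, hR0, h0⟩ := S_sep hS
    (Q := fun i p e => ∀ R' ∈ S i, (Bis S E i R' ∧ ∃ c ∈ S i, ZFSet.pair p c ∈ R') → e ∈ R')
    (Dfn.all (Dfn.imp ((d_bisat hS hE).c2
    (P := fun i p R => Bis S E i R ∧ ∃ c ∈ S i, ZFSet.pair p c ∈ R) _ _) (Dfn.mem _ _))) hp hR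
  refine ⟨R0, hR0, ⟨?_, c, hc, ?_⟩, ?_⟩
  · intro q hq d hd hqd
    obtain ⟨hqdR, hall⟩ := (h0 _).1 hqd
    have first : ∀ r ∈ S i, E i r q → ∃ c' ∈ S i, c' ∈ d ∧ ZFSet.pair r c' ∈ R0 := by
      intro r hr hrq
      obtain ⟨c', hc', hc'd, hrc⟩ := (hB q hq d hd hqdR).1 r hr hrq
      refine ⟨c', hc', hc'd, (h0 _).2 ⟨hrc, ?_⟩⟩
      intro R' hR' hh
      obtain ⟨c'', hc'', _, hrc''⟩ := (hh.1 q hq d hd (hall R' hR' hh)).1 r hr hrq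
      rwa [bis_uniq hS hB hh.1 c' r hr hc' c'' hc'' hrc hrc'']
    refine ⟨first, ?_⟩
    intro c' hc' hc'd
    obtain ⟨r, hr, hrq, hrc⟩ := (hB q hq d hd hqdR).2 c' hc' hc'd
    obtain ⟨c'', hc'', _, hrc''⟩ := first r hr hrq
    refine ⟨r, hr, hrq, ?_⟩
    rwa [bis_uniq hS hB hB c' r hr hc' c'' hc'' hrc ((h0 _).1 hrc'').1]
  · refine (h0 _).2 ⟨hpc, ?_⟩
    rintro R' hR' ⟨hB', c', hc', hpc'⟩
    rwa [bis_uniq hS hB hB' c p hp hc c' hc' hpc hpc']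
  · intro R' hR' hh e he
    exact ((h0 _).1 he).2 R' hR' hh

theorem good_step {i : ℕ} {p P : ZFSet} (hp : p ∈ S i) (hP : P ∈ S i)
    (hPE : ∀ q, q ∈ P ↔ q ∈ S i ∧ E i q p) (hg : ∀ q ∈ P, Good S E i q) : Good S E i p := by
  obtain ⟨B, hB, hBm⟩ := S_image hS (Q := fun i _ q R => MinR S E i q R)
    ((d_min hS hE).c2 _ _) hp hP (by
      intro x _ R hR R' hR' h h'
      ext e
      exact ⟨fun he => h.2 R' hR' h'.1 he, fun he => h'.2 R hR h.1 he⟩)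
  have hU := S_sUnion hS hB
  set U : ZFSet := ZFSet.sUnion B with hUdef
  have hUB : Bis S E i U := by
    intro q hq d hd hqd
    obtain ⟨R, hRB, hqR⟩ := ZFSet.mem_sUnion.1 hqd
    obtain ⟨x, _, hR, hmin⟩ := (hBm R).1 hRB
    obtain ⟨h1, h2⟩ := hmin.1.1 q hq d hd hqR
    constructor
    · intro r hr hrq
      obtain ⟨c', hc', hcd, hh⟩ := h1 r hr hrq
      exact ⟨c', hc', hcd, ZFSet.mem_sUnion.2 ⟨R, hRB, hh⟩⟩
    · intro c' hc' hcd
      obtain ⟨r, hr, hrq, hh⟩ := h2 c' hc' hcd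
      exact ⟨r, hr, hrq, ZFSet.mem_sUnion.2 ⟨R, hRB, hh⟩⟩
  have hUdom : ∀ q ∈ P, ∃ c ∈ S i, ZFSet.pair q c ∈ U := by
    intro q hq
    obtain ⟨R, hR, hmin⟩ := exists_min hS hE ((hPE q).1 hq).1 (hg q hq)
    obtain ⟨c, hc, hqc⟩ := hmin.1.2
    exact ⟨c, hc, ZFSet.mem_sUnion.2 ⟨R, (hBm R).2 ⟨q, hq, hR, hmin⟩, hqc⟩⟩
  obtain ⟨C, hC, hCm⟩ := S_image hS (Q := fun _ U q c => ZFSet.pair q c ∈ U)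
    (d_pm hS _ _ _) hU hP (by
      intro x hx c hc c' hc' h h'
      exact bis_uniq hS hUB hUB c x ((hPE x).1 hx).1 hc c' hc' h h')
  have hpC := S_pair hS hp hC
  refine ⟨U ∪ {ZFSet.pair p C}, S_union hS hU (S_single hS hpC), ?_, C, hC, by simp⟩
  intro q hq d hd hqd
  rcases ZFSet.mem_union.1 hqd with hqd | hqd
  · obtain ⟨h1, h2⟩ := hUB q hq d hd hqd
    constructor
    · intro r hr hrq
      obtain ⟨c', hc', hcd, hh⟩ := h1 r hr hrq
      exact ⟨c', hc', hcd, ZFSet.mem_union.2 (Or.inl hh)⟩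
    · intro c' hc' hcd
      obtain ⟨r, hr, hrq, hh⟩ := h2 c' hc' hcd
      exact ⟨r, hr, hrq, ZFSet.mem_union.2 (Or.inl hh)⟩
  · obtain ⟨rfl, rfl⟩ := ZFSet.pair_inj.1 (ZFSet.mem_singleton.1 hqd)
    constructor
    · intro r hr hrq
      have hrP := (hPE r).2 ⟨hr, hrq⟩
      obtain ⟨c, hc, hrc⟩ := hUdom r hrP
      exact ⟨c, hc, (hCm c).2 ⟨r, hrP, hc, hrc⟩, ZFSet.mem_union.2 (Or.inl hrc)⟩
    · intro c' hc' hcd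
      obtain ⟨r, hrP, _, hrc⟩ := (hCm c').1 hcd
      exact ⟨r, ((hPE r).1 hrP).1, ((hPE r).1 hrP).2, ZFSet.mem_union.2 (Or.inl hrc)⟩

end bisim

/-! ### The system -/

section system

def sysS (D : DirSystem ℕ) (i : ℕ) : Set ZFSet := (D.M i).toSet

def sysE (D : DirSystem ℕ) (i : ℕ) (q p : ZFSet) : Prop :=
  ∃ a b z w, a ≤ b ∧ p = ZFSet.pair (natZ a) z ∧ q = ZFSet.pair (natZ b) w ∧
    z ∈ D.M (i + a) ∧ w ∈ D.pi (i + a) (i + b) z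

theorem sysS_zfc (D : DirSystem ℕ) (i : ℕ) : ModelsZFC (sysS D i) := D.zfc i

variable (D : DirSystem ℕ)
    (hsub : ∀ i j : ℕ, (D.M (i + j) : ZFSet) ⊆ D.M i)
    (ψ : setL.BoundedFormula Empty 4)
    (hψ : ∀ i j k : ℕ, j ≤ k → ∀ x ∈ D.M i, ∀ y ∈ D.M i,
      ((x ∈ D.M (i + j) ∧ D.pi (i + j) (i + k) x = y) ↔
        ZSat (D.M i).toSet ψ ![natZ j, natZ k, x, y]))

theorem pi_mem {i j : ℕ} (h : i ≤ j) {x : ZFSet} (hx : x ∈ D.M i) : D.pi i j x ∈ D.M j :=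
  (D.elem i j h).1 x hx

include hsub hψ in
theorem d_sysE : Dfn (sysS D) (n := 2) (fun i v => sysE D i (v 0) (v 1)) := by
  have hS := sysS_zfc D
  refine Dfn.congr (P := fun i v => ∃ k ∈ sysS D i, ∃ l ∈ sysS D i, ∃ z ∈ sysS D i,
    ∃ w ∈ sysS D i, ∃ u ∈ sysS D i, v 1 = ZFSet.pair k z ∧ v 0 = ZFSet.pair l w ∧
    (∃ n, k = natZ n) ∧ (∃ n, l = natZ n) ∧ k ⊆ l ∧ ZSat (sysS D i) ψ ![k, l, z, u] ∧
    w ∈ u) ?_ ?_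
  · refine Dfn.ex (Dfn.ex (Dfn.ex (Dfn.ex (Dfn.ex ?_))))
    refine Dfn.and ((d_pair hS).c3 (P := fun _ a b c => a = ZFSet.pair b c) _ _ _) ?_
    refine Dfn.and ((d_pair hS).c3 (P := fun _ a b c => a = ZFSet.pair b c) _ _ _) ?_
    refine Dfn.and ((d_nat hS).c1 (P := fun _ a => ∃ n, a = natZ n) _) ?_
    refine Dfn.and ((d_nat hS).c1 (P := fun _ a => ∃ n, a = natZ n) _) ?_
    refine Dfn.and ((d_subset hS).c2 (P := fun _ a b => a ⊆ b) _ _) ?_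
    exact Dfn.and ((Dfn.form4 ψ).c4 (P := fun i a b c d => ZSat (sysS D i) ψ ![a, b, c, d])
      _ _ _ _) (Dfn.mem _ _)
  · intro i v hv
    constructor
    · rintro ⟨k, _, l, _, z, hz, w, hw, u, hu, h1, h0, ⟨a, rfl⟩, ⟨b, rfl⟩, hkl, hsat, hwu⟩
      have hab := natZ_sub.1 hkl
      obtain ⟨hz', rfl⟩ := (hψ i a b hab z hz u hu).2 hsat
      exact ⟨a, b, z, w, hab, h1, h0, hz', hwu⟩
    · rintro ⟨a, b, z, w, hab, h1, h0, hz, hw⟩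
      have hz' : z ∈ sysS D i := hsub i a hz
      have hu : D.pi (i + a) (i + b) z ∈ D.M i := hsub i b (pi_mem D (by omega) hz)
      exact ⟨natZ a, S_nat hS i a, natZ b, S_nat hS i b, z, hz', w, S_trans hS hu hw, _, hu,
        h1, h0, ⟨a, rfl⟩, ⟨b, rfl⟩, natZ_mono hab, (hψ i a b hab z hz' _ hu).1 ⟨hz, rfl⟩, hw⟩

include hsub hψ in
theorem preds_set {i : ℕ} {x : ZFSet} (hx : x ∈ D.M i) :
    ∃ P ∈ sysS D i, ∀ q, q ∈ P ↔ q ∈ sysS D i ∧ sysE D i q (ZFSet.pair ∅ x) := by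
  have hS := sysS_zfc D
  have hω : ZFSet.omega ∈ sysS D i := (hS i).1.2.2.2.2.1
  have h0 : (∅ : ZFSet) ∈ sysS D i := (hS i).1.2.1
  obtain ⟨A, hA, hAm⟩ := S_image hS (Q := fun i x k u =>
      ∃ e ∈ sysS D i, e = ∅ ∧ ZSat (sysS D i) ψ ![e, k, x, u])
    (Dfn.ex (Dfn.and ((d_empty hS).c1 (P := fun _ a => a = ∅) _)
      ((Dfn.form4 ψ).c4 (P := fun i a b c d => ZSat (sysS D i) ψ ![a, b, c, d]) _ _ _ _)))
    (i := i) (p := x) (a := ZFSet.omega) hx hω (by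
      rintro k hk y hy y' hy' ⟨e, _, rfl, h⟩ ⟨e', _, rfl, h'⟩
      obtain ⟨n, rfl⟩ := mem_omega_natZ hk
      rw [← ((hψ i 0 n (Nat.zero_le _) x hx y hy).2 h).2,
        ← ((hψ i 0 n (Nat.zero_le _) x hx y' hy').2 h').2])
  have hX := S_union hS hω (S_sUnion hS hA)
  obtain ⟨P1, hP1, hP1m⟩ := (hS i).2 _ hX
  obtain ⟨P2, hP2, hP2m⟩ := (hS i).2 _ hP1
  obtain ⟨P, hP, hPm⟩ := S_sep hS (Q := fun i p q => sysE D i q p)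
    ((d_sysE D hsub ψ hψ).c2 _ _) (S_pair hS h0 (show x ∈ sysS D i from hx)) hP2
  refine ⟨P, hP, fun q => (hPm q).trans ⟨fun h => ⟨S_trans hS hP2 h.1, h.2⟩, fun h => ⟨?_, h.2⟩⟩⟩
  obtain ⟨hq, a, b, z, w, hab, hp, rfl, hz, hw⟩ := h
  obtain ⟨ha, rfl⟩ := ZFSet.pair_inj.1 hp
  obtain rfl : 0 = a := natZ_inj ha
  obtain ⟨hbS, hwS⟩ := S_unpair hS hq
  have hu : D.pi (i + 0) (i + b) x ∈ D.M i := hsub i b (pi_mem D (by omega) hz)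
  have hwX : w ∈ ZFSet.omega ∪ (ZFSet.sUnion A : ZFSet) := by
    refine ZFSet.mem_union.2 (Or.inr (ZFSet.mem_sUnion.2 ⟨_, ?_, hw⟩))
    exact (hAm _).2 ⟨natZ b, natZ_mem_omega b, hu, ∅, h0, rfl,
      (hψ i 0 b hab x hx _ hu).1 ⟨hz, rfl⟩⟩
  have hbX : natZ b ∈ ZFSet.omega ∪ (ZFSet.sUnion A : ZFSet) :=
    ZFSet.mem_union.2 (Or.inl (natZ_mem_omega b))
  refine (hP2m _).2 ⟨hq, ?_⟩
  intro s hs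
  have hsS := S_trans hS hq hs
  refine (hP1m _).2 ⟨hsS, ?_⟩
  intro t ht
  rcases ZFSet.mem_pair.1 hs with rfl | rfl
  · rw [ZFSet.mem_singleton.1 ht]; exact hbX
  · rcases ZFSet.mem_pair.1 ht with rfl | rfl
    · exact hbX
    · exact hwX

include hsub in
theorem shift {i a : ℕ} {y : ZFSet}
    (h : Good (sysS D) (sysE D) (i + 1) (ZFSet.pair (natZ a) y)) :
    Good (sysS D) (sysE D) i (ZFSet.pair (natZ (a + 1)) y) := by
  have hS := sysS_zfc D
  have hss : ∀ x, x ∈ sysS D (i + 1) → x ∈ sysS D i := fun x hx => hsub i 1 hx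
  obtain ⟨R, hR, hB, c, hc, hyc⟩ := h
  obtain ⟨R', hR', hm⟩ := S_image hS (Q := fun i _ e e' => ∃ k ∈ sysS D i, ∃ z ∈ sysS D i,
      ∃ c ∈ sysS D i, ∃ p ∈ sysS D i, ∃ p' ∈ sysS D i, ∃ k' ∈ sysS D i, (∃ n, k = natZ n) ∧
      k' = insert k k ∧ p = ZFSet.pair k z ∧ p' = ZFSet.pair k' z ∧ e = ZFSet.pair p c ∧
      e' = ZFSet.pair p' c) (by
        refine Dfn.ex (Dfn.ex (Dfn.ex (Dfn.ex (Dfn.ex (Dfn.ex ?_)))))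
        refine Dfn.and ((d_nat hS).c1 (P := fun _ a => ∃ n, a = natZ n) _) ?_
        refine Dfn.and ((d_insert hS).c2 (P := fun _ a b => a = insert b b) _ _) ?_
        refine Dfn.and ((d_pair hS).c3 (P := fun _ a b c => a = ZFSet.pair b c) _ _ _) ?_
        refine Dfn.and ((d_pair hS).c3 (P := fun _ a b c => a = ZFSet.pair b c) _ _ _) ?_
        refine Dfn.and ((d_pair hS).c3 (P := fun _ a b c => a = ZFSet.pair b c) _ _ _) ?_
        exact ((d_pair hS).c3 (P := fun _ a b c => a = ZFSet.pair b c) _ _ _))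
    (i := i) (p := R) (a := R) (hss _ hR) (hss _ hR) (by
      rintro e - u - u' - ⟨k, -, z, -, c, -, p, -, p', -, k', -, -, rfl, rfl, rfl, rfl, rfl⟩
        ⟨k2, -, z2, -, c2, -, p, -, p', -, k', -, -, rfl, rfl, rfl, h, rfl⟩
      obtain ⟨h1, rfl⟩ := ZFSet.pair_inj.1 h
      obtain ⟨rfl, rfl⟩ := ZFSet.pair_inj.1 h1
      rfl)
  have hm' : ∀ p c, ZFSet.pair p c ∈ R' ↔ ∃ n z, p = ZFSet.pair (natZ (n + 1)) z ∧
      ZFSet.pair (ZFSet.pair (natZ n) z) c ∈ R := by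
    intro p c
    rw [hm]
    constructor
    · rintro ⟨e, he, -, k, -, z, -, c', -, p, -, p', -, k', -, ⟨n, rfl⟩, rfl, rfl, rfl, rfl, h⟩
      obtain ⟨rfl, rfl⟩ := ZFSet.pair_inj.1 h
      exact ⟨n, z, rfl, he⟩
    · rintro ⟨n, z, rfl, he⟩
      obtain ⟨h1, hc⟩ := S_unpair hS (hss _ (S_trans hS hR he))
      have hz := (S_unpair hS h1).2
      have hn := S_nat hS i n
      have hn' := S_nat hS i (n + 1)
      have h2 := S_pair hS hn' hz
      exact ⟨_, he, S_pair hS h2 hc, _, hn, z, hz, c, hc, _, h1, _, h2, _, hn', ⟨n, rfl⟩, rfl,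
        rfl, rfl, rfl, rfl⟩
  refine ⟨R', hR', ?_, c, hss _ hc, (hm' _ _).2 ⟨a, y, rfl, hyc⟩⟩
  intro p hp d hd hpd
  obtain ⟨n, z, rfl, hR1⟩ := (hm' _ _).1 hpd
  obtain ⟨hp1, hd1⟩ := S_unpair hS (S_trans hS hR hR1)
  obtain ⟨h1, h2⟩ := hB _ hp1 d hd1 hR1
  constructor
  · rintro q hq ⟨a', b', z', w, hab, hpe, rfl, hz, hw⟩
    obtain ⟨ha, rfl⟩ := ZFSet.pair_inj.1 hpe
    obtain rfl := natZ_inj ha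
    obtain ⟨b, rfl⟩ : ∃ b, b' = b + 1 := ⟨b' - 1, by omega⟩
    have e1 : i + (n + 1) = i + 1 + n := by omega
    have e2 : i + (b + 1) = i + 1 + b := by omega
    rw [e1] at hz
    rw [e1, e2] at hw
    have hu := pi_mem D (show i + 1 + n ≤ i + 1 + b by omega) hz
    have hw' : w ∈ sysS D (i + 1) := hsub (i + 1) b (S_trans hS (i := i + 1 + b) hu hw)
    obtain ⟨c', hc', hcd, hh⟩ := h1 (ZFSet.pair (natZ b) w) (S_pair hS (S_nat hS _ b) hw')
      ⟨n, b, z, w, by omega, rfl, rfl, hz, hw⟩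
    exact ⟨c', hss _ hc', hcd, (hm' _ _).2 ⟨b, w, rfl, hh⟩⟩
  · intro c' hc' hcd
    obtain ⟨q, hq, ⟨a', b, z', w, hab, hpe, rfl, hz, hw⟩, hh⟩ := h2 c' (S_trans hS hd1 hcd) hcd
    obtain ⟨ha, rfl⟩ := ZFSet.pair_inj.1 hpe
    obtain rfl := natZ_inj ha
    have hwS := (S_unpair hS hq).2
    refine ⟨ZFSet.pair (natZ (b + 1)) w, S_pair hS (S_nat hS _ _) (hss _ hwS),
      ⟨n + 1, b + 1, z, w, by omega, rfl, rfl, ?_, ?_⟩, (hm' _ _).2 ⟨b, w, rfl, hh⟩⟩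
    · rwa [show i + (n + 1) = i + 1 + n by omega]
    · rwa [show i + (n + 1) = i + 1 + n by omega, show i + (b + 1) = i + 1 + b by omega]

include hsub in
theorem shift_many (j : ℕ) : ∀ {i a : ℕ} {y : ZFSet},
    Good (sysS D) (sysE D) (i + j) (ZFSet.pair (natZ a) y) →
    Good (sysS D) (sysE D) i (ZFSet.pair (natZ (a + j)) y) := by
  induction j with
  | zero => intro i a y h; exact h
  | succ j ih =>
    intro i a y h
    have := ih (i := i) (a := a + 1) (shift D hsub (i := i + j) h)
    rwa [show a + 1 + j = a + (j + 1) by omega] at this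

theorem acc_of_bis {i : ℕ} {R : ZFSet} (hR : R ∈ sysS D i) (hB : Bis (sysS D) (sysE D) i R)
    (hsub : ∀ i j : ℕ, (D.M (i + j) : ZFSet) ⊆ D.M i) (c : ZFSet) :
    ∀ (a : ℕ) (z : ZFSet) (m : ℕ) (hm : i + a = m) (hz : z ∈ D.M m),
      ZFSet.pair (ZFSet.pair (natZ a) z) c ∈ R →
      Acc (fun p q : {p : ℕ × ZFSet // p.2 ∈ D.M p.1} =>
        ∃ k, p.1.1 ≤ k ∧ q.1.1 ≤ k ∧ D.pi p.1.1 k p.1.2 ∈ D.pi q.1.1 k q.1.2) ⟨(m, z), hz⟩ := by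
  have hS := sysS_zfc D
  refine ZFSet.inductionOn c fun c ih => ?_
  rintro a z m rfl hz hc
  constructor
  rintro ⟨⟨l, w⟩, hw⟩ ⟨k, hlk, hak, hmem⟩
  simp only at hlk hak hmem hw
  obtain ⟨b, rfl⟩ : ∃ b, k = i + b := ⟨k - i, by omega⟩
  have hw' : D.pi l (i + b) w ∈ D.M (i + b) := pi_mem D hlk hw
  obtain ⟨h1, h2⟩ := S_unpair hS (S_trans hS hR hc)
  obtain ⟨c', hc', hcc, hh⟩ := (hB _ h1 c h2 hc).1 (ZFSet.pair (natZ b) (D.pi l (i + b) w))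
    (S_pair hS (S_nat hS _ _) (hsub i b hw')) ⟨a, b, z, _, by omega, rfl, rfl, hz, hmem⟩
  have hacc := ih c' hcc b _ _ rfl hw' hh
  constructor
  rintro ⟨⟨l', w'⟩, hw2⟩ ⟨k', hk1, hk2, hmem'⟩
  simp only at hk1 hk2 hmem' hw2
  refine hacc.inv ⟨max k' (i + b), hk1.trans (le_max_left _ _), le_max_right _ _, ?_⟩
  simp only
  rw [D.map_comp l (i + b) _ hlk (le_max_right _ _) w hw,
    ← D.map_comp l' k' _ hk1 (le_max_left _ _) w' hw2,
    ← D.map_comp l k' _ hk2 (le_max_left _ _) w hw]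
  have hx := pi_mem D hk1 hw2
  have hy := pi_mem D hk2 hw
  exact ((D.elem k' (max k' (i + b)) (le_max_left _ _)).2 2
    (.rel SetRelSym.mem ![.var (Sum.inr 0), .var (Sum.inr 1)])
    ![D.pi l' k' w', D.pi l k' w] (by
      intro j; fin_cases j
      · exact hx
      · exact hy)).1 hmem'

include hsub hψ in
theorem sys_wf :
    WellFounded (fun p q : {p : ℕ × ZFSet // p.2 ∈ D.M p.1} =>
      ∃ k, p.1.1 ≤ k ∧ q.1.1 ≤ k ∧ D.pi p.1.1 k p.1.2 ∈ D.pi q.1.1 k q.1.2) := by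
  have hS := sysS_zfc D
  have hE := d_sysE D hsub ψ hψ
  have hG : Dfn (sysS D) (n := 1)
      (fun i v => Good (sysS D) (sysE D) i (ZFSet.pair ∅ (v 0))) := by
    refine Dfn.congr (P := fun i v => ∃ e ∈ sysS D i, ∃ p ∈ sysS D i, e = ∅ ∧
      p = ZFSet.pair e (v 0) ∧ Good (sysS D) (sysE D) i p) ?_ ?_
    · exact Dfn.ex (Dfn.ex (Dfn.and ((d_empty hS).c1 (P := fun _ a => a = ∅) _)
        (Dfn.and ((d_pair hS).c3 (P := fun _ a b c => a = ZFSet.pair b c) _ _ _)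
        ((d_good hS hE).c1 _))))
    · intro i v hv
      constructor
      · rintro ⟨e, _, p, _, rfl, rfl, h⟩; exact h
      · intro h
        exact ⟨∅, (hS i).1.2.1, _, S_pair hS (hS i).1.2.1 (hv 0), rfl, rfl, h⟩
  have hG0 : ∀ x, x ∈ D.M 0 → Good (sysS D) (sysE D) 0 (ZFSet.pair ∅ x) := by
    intro x
    refine ZFSet.inductionOn x fun x ih hx => ?_
    obtain ⟨P, hP, hPm⟩ := preds_set D hsub ψ hψ hx
    refine good_step hS hE (S_pair hS (hS 0).1.2.1 (show x ∈ sysS D 0 from hx)) hP hPm ?_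
    intro q hq
    obtain ⟨hqS, a, b, z, w, hab, hp, rfl, hz, hw⟩ := (hPm q).1 hq
    obtain ⟨ha, rfl⟩ := ZFSet.pair_inj.1 hp
    obtain rfl : 0 = a := natZ_inj ha
    have hdef : Dfn (sysS D) (n := 1) (fun i v => ∀ y ∈ sysS D i, y ∈ v 0 →
        Good (sysS D) (sysE D) i (ZFSet.pair ∅ y)) :=
      Dfn.all (Dfn.imp (Dfn.mem _ _)
        (hG.c1 (P := fun i x => Good (sysS D) (sysE D) i (ZFSet.pair ∅ x)) _))
    obtain ⟨χ, hχ⟩ := hdef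
    have hb : (0 : ℕ) + 0 ≤ 0 + b := by omega
    have hv : ∀ a : Fin 1, (fun _ => x : Fin 1 → ZFSet) a ∈ sysS D 0 := fun _ => hx
    have h1 := (hχ 0 (fun _ => x) hv).2 (fun y hy hyx => ih y hyx hy)
    have h2 := ((D.elem (0 + 0) (0 + b) hb).2 1 χ (fun _ => x) hv).1 h1
    have hux := pi_mem D hb hz
    have h3 := (hχ (0 + b) (fun _ => D.pi (0 + 0) (0 + b) x) (fun _ => hux)).1 h2 w
      (S_trans hS (i := 0 + b) hux hw) hw
    have := shift_many D hsub b (i := 0) (a := 0) h3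
    rwa [Nat.zero_add] at this
  have hGall : ∀ j x, x ∈ D.M j → Good (sysS D) (sysE D) j (ZFSet.pair ∅ x) := by
    intro j x hx
    have hdef : Dfn (sysS D) (n := 0) (fun i _ => ∀ y ∈ sysS D i,
        Good (sysS D) (sysE D) i (ZFSet.pair ∅ y)) :=
      Dfn.all (hG.c1 (P := fun i x => Good (sysS D) (sysE D) i (ZFSet.pair ∅ x)) _)
    obtain ⟨χ, hχ⟩ := hdef
    have h1 := (hχ 0 (fun a => a.elim0) (fun a => a.elim0)).2 hG0
    have h2 := ((D.elem 0 j (Nat.zero_le _)).2 0 χ (fun a => a.elim0) (fun a => a.elim0)).1 h1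
    exact (hχ j _ (fun a => a.elim0)).1 h2 x hx
  constructor
  rintro ⟨⟨j, x⟩, hx⟩
  obtain ⟨R, hR, hB, c, hc, hh⟩ := hGall j x hx
  exact acc_of_bis D hR hB hsub c 0 x j rfl hx hh

end system

/-- Let `{M i, pi i j | i ≤ j < ω}` be a directed system of models of set
theory indexed by `(ω, ≤)` with `M (i+j) ⊆ M i` for all `i, j`.  Suppose there are formulas
`φ` and `ψ` such that for all `i, j, k < ω` with `j ≤ k` and all `x, y ∈ M i`:
`x ∈ M (i+j)` iff `M i ⊨ φ(j, x)`, and (`x ∈ M (i+j)` and `pi (i+j) (i+k) x = y`) iff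
`M i ⊨ ψ(j, k, x, y)`.  Then the direct limit of the system is well-founded, i.e. the
membership relation on the system of pairs `(i, x)` with `x ∈ M i` (where
`(i,x) E (j,y)` iff `pi i k x ∈ pi j k y` for some `k ≥ i, j`) is well-founded. -/
theorem direct_limit_wellFounded (D : DirSystem ℕ)
    (hsub : ∀ i j : ℕ, (D.M (i + j) : ZFSet) ⊆ D.M i)
    (φ : setL.BoundedFormula Empty 2)
    (hφ : ∀ i j : ℕ, ∀ x ∈ D.M i,
      (x ∈ D.M (i + j) ↔ ZSat (D.M i).toSet φ ![natZ j, x]))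
    (ψ : setL.BoundedFormula Empty 4)
    (hψ : ∀ i j k : ℕ, j ≤ k → ∀ x ∈ D.M i, ∀ y ∈ D.M i,
      ((x ∈ D.M (i + j) ∧ D.pi (i + j) (i + k) x = y) ↔
        ZSat (D.M i).toSet ψ ![natZ j, natZ k, x, y])) :
    WellFounded (fun p q : {p : ℕ × ZFSet // p.2 ∈ D.M p.1} =>
      ∃ k, p.1.1 ≤ k ∧ q.1.1 ≤ k ∧ D.pi p.1.1 k p.1.2 ∈ D.pi q.1.1 k q.1.2) := by
  exact sys_wf D hsub ψ hψ
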